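/- arXiv:2002.03585 — 3 statements merged into one kernel-verified Lean document; each statement's English description precedes it below -/
import Mathlib

section
/- Every deterministic episodic MDP is Optimal Policy Feed-Forward. Precisely: let a deterministic MDP be given, and define the optimal policy MDP graph as the relation E on S with E(s,s') iff s ≠ t and g(s,a) = s' for some a ∈ A*(s). If the MDP is episodic (every greedy-optimal policy π satisfies T(s,a,π) < ∞ for every pair (s,a)), then E has no directed cycles, i.e., there is no state s with (s,s) in the transitive closure of E. -/
/-- A deterministic MDP: finite states `S` with terminal state `t`, actions `A`,
deterministic transition function `g`, reward function `r`, and discount `γ ∈ (0,1]`.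
The terminal state is absorbing with zero reward. -/
structure DetMDP (S A : Type) where
  t : S
  g : S → A → S
  r : S → A → ℝ
  γ : ℝ
  γ_pos : 0 < γ
  γ_le_one : γ ≤ 1
  g_t : ∀ a, g t a = t
  r_t : ∀ a, r t a = 0

namespace DetMDP

variable {S A : Type}

/-- The trajectory of (state, action) pairs starting from `(s, a)` and thereafter
following policy `π`: `s_0 = s`, `a_0 = a`, `s_{u+1} = g s_u a_u`, `a_{u+1} = π s_{u+1}`. -/
def traj (M : DetMDP S A) (π : S → A) (s : S) (a : A) : ℕ → S × A
  | 0 => (s, a)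
  | u + 1 =>
    let p := traj M π s a u
    let s' := M.g p.1 p.2
    (s', π s')

/-- The trajectory from `(s,a)` under `π` eventually hits the terminal state. -/
def Terminates (M : DetMDP S A) (π : S → A) (s : S) (a : A) : Prop :=
  ∃ u, (M.traj π s a u).1 = M.t

/-- The hitting time `T(s,a,π)`: the least `u` with `s_u = t`
(junk value `0` when the trajectory never terminates). -/
noncomputable def hit (M : DetMDP S A) (π : S → A) (s : S) (a : A) : ℕ :=
  sInf {u | (M.traj π s a u).1 = M.t}

/-- The episodic return `G(s,a,π) = Σ_{u=0}^{T-1} γ^u r(s_u, a_u)`. -/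
noncomputable def ret (M : DetMDP S A) (π : S → A) (s : S) (a : A) : ℝ :=
  ∑ u ∈ Finset.range (M.hit π s a),
    M.γ ^ u * M.r (M.traj π s a u).1 (M.traj π s a u).2

/-- The optimal action-value function `Q*(s,a)`: the maximum of `G(s,a,π)` over the
(finitely many) policies `π` that terminate from `(s,a)`. -/
noncomputable def Qstar (M : DetMDP S A) (s : S) (a : A) : ℝ :=
  sSup {x | ∃ π : S → A, M.Terminates π s a ∧ M.ret π s a = x}

/-- The optimal value function `V*(s) = max_a Q*(s,a)`. -/
noncomputable def Vstar (M : DetMDP S A) (s : S) : ℝ :=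
  sSup {x | ∃ a : A, M.Qstar s a = x}

/-- The set of optimal actions `A*(s)`. -/
def Astar (M : DetMDP S A) (s : S) : Set A :=
  {a | M.Qstar s a = M.Vstar s}

/-- A policy is greedy-optimal if it selects an optimal action in every state. -/
def GreedyOpt (M : DetMDP S A) (π : S → A) : Prop :=
  ∀ s, π s ∈ M.Astar s

/-- The MDP is episodic: every greedy-optimal policy terminates from every start pair. -/
def Episodic (M : DetMDP S A) : Prop :=
  ∀ π : S → A, M.GreedyOpt π → ∀ s a, M.Terminates π s a

end DetMDP

/-!
A state on a cycle of the optimal policy graph has an optimal action whose successor again lies on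
a cycle. A greedy-optimal policy choosing such an action wherever one exists never leaves the set
of states on cycles. The terminal state has no outgoing edge, so it is not on a cycle, and this
policy never terminates from a state that is.
-/

theorem exists_rel_and_transGen_self {α : Type*} {r : α → α → Prop} {a : α}
    (h : Relation.TransGen r a a) : ∃ b, r a b ∧ Relation.TransGen r b b := by
  obtain ⟨b, hab, hba⟩ := Relation.TransGen.head'_iff.mp h
  exact ⟨b, hab, Relation.TransGen.tail' hba hab⟩

namespace DetMDP

variable {S A : Type}

/-- The state map of the policy `π`: the state reached from `s` by playing `π s`. -/
def policyStep (M : DetMDP S A) (π : S → A) (s : S) : S :=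
  M.g s (π s)

/-- The edge relation of the optimal policy MDP graph: a nonterminal state `s` is joined to its
successor under each optimal action. -/
def OptEdge (M : DetMDP S A) (s s' : S) : Prop :=
  s ≠ M.t ∧ ∃ a ∈ M.Astar s, M.g s a = s'

theorem traj_eq_iterate_policyStep (M : DetMDP S A) (π : S → A) (s : S) (u : ℕ) :
    M.traj π s (π s) u = ((M.policyStep π)^[u] s, π ((M.policyStep π)^[u] s)) := by
  induction u with
  | zero => rfl
  | succ u ih => simp only [traj, ih, Function.iterate_succ_apply', policyStep]

theorem terminates_iff_exists_iterate_eq {M : DetMDP S A} {π : S → A} {s : S} :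
    M.Terminates π s (π s) ↔ ∃ u, (M.policyStep π)^[u] s = M.t := by
  simp only [Terminates, traj_eq_iterate_policyStep]

theorem Terminates.t_mem_of_mapsTo {M : DetMDP S A} {π : S → A} {C : Set S} {s : S}
    (h : M.Terminates π s (π s)) (hC : Set.MapsTo (M.policyStep π) C C) (hs : s ∈ C) :
    M.t ∈ C := by
  obtain ⟨u, hu⟩ := terminates_iff_exists_iterate_eq.mp h
  exact hu ▸ hC.iterate u hs

theorem astar_nonempty [Finite A] [Nonempty A] (M : DetMDP S A) (s : S) :
    (M.Astar s).Nonempty :=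
  (Set.range_nonempty (M.Qstar s)).csSup_mem (Set.finite_range _)

theorem exists_greedyOpt_mapsTo {M : DetMDP S A} (hA : ∀ s, (M.Astar s).Nonempty) {C : Set S}
    (hC : ∀ s ∈ C, ∃ a ∈ M.Astar s, M.g s a ∈ C) :
    ∃ π, M.GreedyOpt π ∧ Set.MapsTo (M.policyStep π) C C := by
  have exists_action : ∀ s, ∃ a ∈ M.Astar s, s ∈ C → M.g s a ∈ C := by
    intro s
    by_cases hs : s ∈ C
    · obtain ⟨a, ha, hga⟩ := hC s hs
      exact ⟨a, ha, fun _ => hga⟩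
    · obtain ⟨a, ha⟩ := hA s
      exact ⟨a, ha, fun h => absurd h hs⟩
  choose π hπ hπC using exists_action
  exact ⟨π, hπ, hπC⟩

theorem Episodic.t_mem_of_forall_exists_astar {M : DetMDP S A} (heps : M.Episodic)
    (hA : ∀ s, (M.Astar s).Nonempty) {C : Set S} (hne : C.Nonempty)
    (hC : ∀ s ∈ C, ∃ a ∈ M.Astar s, M.g s a ∈ C) :
    M.t ∈ C := by
  obtain ⟨s, hs⟩ := hne
  obtain ⟨π, hπ, hmaps⟩ := exists_greedyOpt_mapsTo hA hC
  exact (heps π hπ s (π s)).t_mem_of_mapsTo hmaps hs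

end DetMDP

theorem deterministic_episodic_is_OPFF_general {S A : Type} (M : DetMDP S A)
    (hA : ∀ s, (M.Astar s).Nonempty) (heps : M.Episodic) :
    ¬ ∃ s, Relation.TransGen M.OptEdge s s := by
  rintro ⟨s, hs⟩
  let C : Set S := {s | Relation.TransGen M.OptEdge s s}
  have cycle_step : ∀ s ∈ C, ∃ a ∈ M.Astar s, M.g s a ∈ C := by
    intro s hs
    obtain ⟨_, ⟨-, a, ha, rfl⟩, hcycle⟩ := exists_rel_and_transGen_self hs
    exact ⟨a, ha, hcycle⟩
  have t_cycle : M.t ∈ C := heps.t_mem_of_forall_exists_astar hA ⟨s, hs⟩ cycle_step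
  obtain ⟨_, ⟨ht, -⟩, -⟩ := exists_rel_and_transGen_self t_cycle
  exact ht rfl

/-- Every deterministic episodic MDP is Optimal Policy Feed-Forward:
the optimal policy MDP graph — with an edge from `s` to `s'` iff `s ≠ t` and
`g s a = s'` for some optimal action `a ∈ A*(s)` — has no directed cycles. -/
theorem deterministic_episodic_is_OPFF
    {S A : Type} [Fintype S] [Fintype A] [Nonempty A]
    (M : DetMDP S A)
    (hterm : ∀ (s : S) (a : A), ∃ π : S → A, M.Terminates π s a)
    (heps : M.Episodic) :
    ¬ ∃ s : S, Relation.TransGen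
      (fun s s' : S => s ≠ M.t ∧ ∃ a ∈ M.Astar s, M.g s a = s') s s :=
  deterministic_episodic_is_OPFF_general M M.astar_nonempty heps
end

section
/- (Bellman optimality equation for deterministic episodic MDPs.) Let a deterministic MDP be given and assume it is episodic (every greedy-optimal policy π satisfies T(s,a,π) < ∞ for every pair (s,a)). Then V*(t) = 0, and for every state s ∈ S and every action a ∈ A: Q*(s,a) = r(s,a) + γ · V*(g(s,a)), where V*(s') = max_{a'∈A} Q*(s',a'). -/
/-!
Cutting off the first step of a terminating trajectory gives
`G(s,a,π) = r(s,a) + γ G(g(s,a), π(g(s,a)), π)`, hence `Q*(s,a) ≤ r(s,a) + γ V*(g(s,a))`.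
The reverse inequality can fail, because the optimal first action at `g(s,a)` together with the
policy followed afterwards need not form a single stationary policy. If a greedy-optimal policy `π`
terminates, however, applying the first inequality successively along its trajectory shows that
`π` attains `V*` from every state, so that `π` witnesses the reverse inequality at all pairs
simultaneously.
-/

namespace DetMDP

variable {S A : Type} {M : DetMDP S A} {π : S → A} {s : S} {a : A}

theorem traj_succ' (M : DetMDP S A) (π : S → A) (s : S) (a : A) (u : ℕ) :
    M.traj π s a (u + 1) = M.traj π (M.g s a) (π (M.g s a)) u := by
  induction u with
  | zero => rfl
  | succ u ih => rw [traj, ih, traj]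

theorem terminates_t (M : DetMDP S A) (π : S → A) (a : A) : M.Terminates π M.t a :=
  ⟨0, rfl⟩

theorem terminates_iff_next :
    M.Terminates π s a ↔ M.Terminates π (M.g s a) (π (M.g s a)) := by
  constructor
  · rintro ⟨_ | u, hu⟩
    · obtain rfl : s = M.t := hu
      simpa only [M.g_t] using M.terminates_t π (π M.t)
    · exact ⟨u, by rwa [← traj_succ']⟩
  · rintro ⟨u, hu⟩
    exact ⟨u + 1, by rwa [traj_succ']⟩

theorem Terminates.traj_hit (h : M.Terminates π s a) : (M.traj π s a (M.hit π s a)).1 = M.t :=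
  Nat.sInf_mem h

theorem hit_t (M : DetMDP S A) (π : S → A) (a : A) : M.hit π M.t a = 0 :=
  Nat.sInf_eq_zero.2 (Or.inl rfl)

theorem Terminates.hit_eq_hit_next_add_one (h : M.Terminates π s a) (hs : s ≠ M.t) :
    M.hit π s a = M.hit π (M.g s a) (π (M.g s a)) + 1 := by
  have hit_pos : 1 ≤ M.hit π s a := by
    refine Nat.one_le_iff_ne_zero.2 fun h0 => hs ?_
    have at_t := h.traj_hit
    rwa [h0] at at_t
  simp only [hit, ← traj_succ']
  exact (Nat.sInf_add hit_pos).symm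

theorem ret_t (M : DetMDP S A) (π : S → A) (a : A) : M.ret π M.t a = 0 := by
  rw [ret, hit_t, Finset.sum_range_zero]

theorem Terminates.ret_eq_add_ret_next (h : M.Terminates π s a) :
    M.ret π s a = M.r s a + M.γ * M.ret π (M.g s a) (π (M.g s a)) := by
  by_cases hs : s = M.t
  · subst hs
    rw [M.g_t, M.r_t, ret_t, ret_t, mul_zero, add_zero]
  · rw [ret, h.hit_eq_hit_next_add_one hs, Finset.sum_range_succ', add_comm, ret, Finset.mul_sum]
    congr 1
    · rw [pow_zero, one_mul, traj]
    · refine Finset.sum_congr rfl fun u _ => ?_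
      rw [traj_succ', pow_succ', mul_assoc]

theorem Qstar_t (M : DetMDP S A) (a : A) : M.Qstar M.t a = 0 := by
  have : Nonempty A := ⟨a⟩
  simp [Qstar, terminates_t, ret_t]

theorem Vstar_t (M : DetMDP S A) : M.Vstar M.t = 0 := by
  calc M.Vstar M.t = ⨆ a, M.Qstar M.t a := rfl
    _ = 0 := by simp only [Qstar_t, Real.iSup_const_zero]

/-- The returns of terminating trajectories from each state are bounded above, uniformly in the
policy and the first action. This makes the suprema defining `Qstar` and `Vstar` genuine
when `S` or `A` is infinite. -/
def HasBoundedReturns (M : DetMDP S A) : Prop :=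
  ∀ s, BddAbove {x | ∃ (π : S → A) (a : A), M.Terminates π s a ∧ M.ret π s a = x}

theorem hasBoundedReturns_of_finite [Finite S] [Finite A] (M : DetMDP S A) :
    M.HasBoundedReturns := by
  intro s
  refine (Set.finite_range fun p : (S → A) × A => M.ret p.1 s p.2).bddAbove.mono ?_
  rintro _ ⟨π, a, -, rfl⟩
  exact ⟨(π, a), rfl⟩

namespace HasBoundedReturns

theorem ret_le_Qstar (hM : M.HasBoundedReturns) (h : M.Terminates π s a) :
    M.ret π s a ≤ M.Qstar s a := by
  refine le_csSup ((hM s).mono ?_) ⟨π, h, rfl⟩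
  rintro _ ⟨π', h', rfl⟩
  exact ⟨π', a, h', rfl⟩

theorem Qstar_le_Vstar (hM : M.HasBoundedReturns) (s : S) (a : A) :
    M.Qstar s a ≤ M.Vstar s := by
  obtain ⟨C, hC⟩ := hM s
  have Qstar_le (a' : A) : M.Qstar s a' ≤ max C 0 := by
    -- The bound `0` covers actions with no terminating policy, where `Qstar` is `sSup ∅ = 0`.
    refine Real.sSup_le ?_ (le_max_right C 0)
    rintro _ ⟨π, h, rfl⟩
    exact (hC ⟨π, a', h, rfl⟩).trans (le_max_left C 0)
  exact le_csSup ⟨max C 0, Set.forall_mem_range.2 Qstar_le⟩ ⟨a, rfl⟩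

theorem ret_le_Vstar (hM : M.HasBoundedReturns) (h : M.Terminates π s a) :
    M.ret π s a ≤ M.Vstar s :=
  (hM.ret_le_Qstar h).trans (hM.Qstar_le_Vstar s a)

theorem Qstar_le_add_Vstar_next (hM : M.HasBoundedReturns) (h : ∃ π, M.Terminates π s a) :
    M.Qstar s a ≤ M.r s a + M.γ * M.Vstar (M.g s a) := by
  obtain ⟨π₀, h₀⟩ := h
  refine csSup_le ⟨_, π₀, h₀, rfl⟩ ?_
  rintro _ ⟨π, h, rfl⟩
  calc M.ret π s a = M.r s a + M.γ * M.ret π (M.g s a) (π (M.g s a)) := h.ret_eq_add_ret_next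
    _ ≤ M.r s a + M.γ * M.Vstar (M.g s a) := by
      have := M.γ_pos.le
      gcongr
      exact hM.ret_le_Vstar (terminates_iff_next.1 h)

end HasBoundedReturns

theorem exists_greedyOpt [Finite A] [Nonempty A] (M : DetMDP S A) : ∃ π, M.GreedyOpt π := by
  choose π hπ using fun s =>
    (Set.range_nonempty (M.Qstar s)).csSup_mem (Set.finite_range (M.Qstar s))
  exact ⟨π, hπ⟩

theorem GreedyOpt.Vstar_le_ret (hπ : M.GreedyOpt π) (hM : M.HasBoundedReturns)
    (h : M.Terminates π s (π s)) : M.Vstar s ≤ M.ret π s (π s) := by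
  obtain ⟨u, hu⟩ := h
  induction u generalizing s with
  | zero =>
    obtain rfl : s = M.t := hu
    rw [Vstar_t, ret_t]
  | succ u ih =>
    have h : M.Terminates π s (π s) := ⟨u + 1, hu⟩
    rw [traj_succ'] at hu
    calc M.Vstar s = M.Qstar s (π s) := (hπ s).symm
      _ ≤ M.r s (π s) + M.γ * M.Vstar (M.g s (π s)) := hM.Qstar_le_add_Vstar_next ⟨π, h⟩
      _ ≤ M.r s (π s) + M.γ * M.ret π (M.g s (π s)) (π (M.g s (π s))) := by
        have := M.γ_pos.le
        gcongr
        exact ih hu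
      _ = M.ret π s (π s) := h.ret_eq_add_ret_next.symm

theorem GreedyOpt.add_Vstar_next_le_Qstar (hπ : M.GreedyOpt π) (hM : M.HasBoundedReturns)
    (h : M.Terminates π s a) : M.r s a + M.γ * M.Vstar (M.g s a) ≤ M.Qstar s a :=
  calc M.r s a + M.γ * M.Vstar (M.g s a)
    _ ≤ M.r s a + M.γ * M.ret π (M.g s a) (π (M.g s a)) := by
      have := M.γ_pos.le
      gcongr
      exact hπ.Vstar_le_ret hM (terminates_iff_next.1 h)
    _ = M.ret π s a := h.ret_eq_add_ret_next.symm
    _ ≤ M.Qstar s a := hM.ret_le_Qstar h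

end DetMDP

theorem bellman_optimality_deterministic_episodic_general {S A : Type} (M : DetMDP S A)
    (hM : M.HasBoundedReturns)
    (hproper : ∃ π, M.GreedyOpt π ∧ ∀ s, M.Terminates π s (π s)) :
    M.Vstar M.t = 0 ∧
      ∀ (s : S) (a : A), M.Qstar s a = M.r s a + M.γ * M.Vstar (M.g s a) := by
  obtain ⟨π, hπ, hterm⟩ := hproper
  refine ⟨M.Vstar_t, fun s a => ?_⟩
  have h : M.Terminates π s a := DetMDP.terminates_iff_next.2 (hterm (M.g s a))
  exact le_antisymm (hM.Qstar_le_add_Vstar_next ⟨π, h⟩) (hπ.add_Vstar_next_le_Qstar hM h)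

/-- Bellman optimality equation for deterministic episodic MDPs:
`V*(t) = 0` and `Q*(s,a) = r(s,a) + γ · V*(g(s,a))` for all `s, a`. -/
theorem bellman_optimality_deterministic_episodic
    {S A : Type} [Fintype S] [Fintype A] [Nonempty A]
    (M : DetMDP S A)
    (hterm : ∀ (s : S) (a : A), ∃ π : S → A, M.Terminates π s a)
    (heps : M.Episodic) :
    M.Vstar M.t = 0 ∧
      ∀ (s : S) (a : A), M.Qstar s a = M.r s a + M.γ * M.Vstar (M.g s a) := by
  obtain ⟨π, hπ⟩ := M.exists_greedyOpt
  exact bellman_optimality_deterministic_episodic_general M M.hasBoundedReturns_of_finite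
    ⟨π, hπ, fun s => heps π hπ s (π s)⟩
end

section
/- (Mixture-of-sample-means bound from the proof of Theorem 2.) Let I be a nonempty finite index set, B ≥ 0, C ∈ ℝ, and for each i ∈ I let (G_i(l))_{l≥0} be a sequence of real numbers with |G_i(l)| ≤ B for all l. For each i ∈ I let L_i : ℕ → ℕ be nondecreasing, and set L(u) = Σ_{i∈I} L_i(u); assume L(u) → ∞ as u → ∞. Assume that for every i ∈ I such that L_i(u) → ∞, the sample means (1/n) Σ_{l=0}^{n−1} G_i(l) converge as n → ∞ to a limit c_i with c_i ≤ C. Then for every ε > 0 there exists U such that for all u ≥ U: (1/L(u)) Σ_{i∈I} Σ_{l=0}^{L_i(u)−1} G_i(l) ≤ C + ε; equivalently, limsup_{u→∞} (1/L(u)) Σ_{i∈I} Σ_{l=0}^{L_i(u)−1} G_i(l) ≤ C. -/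
/-!
Fix `C < a < b`. For an index whose count stays bounded, the partial sum takes only finitely many
values; for any other index, the sample means are eventually at most `a`. In either case the partial
sum exceeds `a` times the count by at most a constant. Adding up over the finitely many indices, the
total exceeds `a` times the total count by at most a constant, which `(b - a)` times the total count
absorbs once that count is large.
-/

open Filter

section Excess

variable {ι 𝕜 : Type*} [Field 𝕜] [LinearOrder 𝕜] [IsStrictOrderedRing 𝕜]
  {l : Filter ι} {s N : ι → 𝕜} {a b : 𝕜}

theorem isBoundedUnder_sub_mul_of_eventually_div_le (hN : Tendsto N l atTop)
    (h : ∀ᶠ u in l, s u / N u ≤ a) :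
    IsBoundedUnder (· ≤ ·) l fun u ↦ s u - a * N u := by
  refine isBoundedUnder_of_eventually_le (a := 0) ?_
  filter_upwards [h, hN.eventually_gt_atTop 0] with u hu hpos
  exact sub_nonpos.mpr ((div_le_iff₀ hpos).mp hu)

theorem eventually_div_le_of_isBoundedUnder_sub_mul (hN : Tendsto N l atTop)
    (h : IsBoundedUnder (· ≤ ·) l fun u ↦ s u - a * N u) (hab : a < b) :
    ∀ᶠ u in l, s u / N u ≤ b := by
  obtain ⟨K, hK⟩ := h.eventually_le
  have hexcess : ∀ᶠ u in l, K ≤ (b - a) * N u :=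
    (hN.const_mul_atTop (sub_pos.mpr hab)).eventually_ge_atTop K
  filter_upwards [hK, hexcess, hN.eventually_gt_atTop 0] with u hsK hKN hpos
  rw [div_le_iff₀ hpos]
  linarith

end Excess

theorem isBoundedUnder_le_comp_of_locallyFiniteOrderBot {ι α β : Type*} [Preorder α]
    [LocallyFiniteOrderBot α] [Preorder β] [IsDirectedOrder β] [Nonempty β] {l : Filter ι}
    {L : ι → α} (hL : IsBoundedUnder (· ≤ ·) l L) (f : α → β) :
    IsBoundedUnder (· ≤ ·) l fun u ↦ f (L u) := by
  obtain ⟨M, hM⟩ := hL.eventually_le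
  obtain ⟨K, hK⟩ := ((Set.finite_Iic M).image f).bddAbove
  exact isBoundedUnder_of_eventually_le (hM.mono fun u hu ↦ hK (Set.mem_image_of_mem f hu))

section SampleMeans

variable {I ι 𝕜 : Type*} [Field 𝕜] [LinearOrder 𝕜] [IsStrictOrderedRing 𝕜] [Archimedean 𝕜]

theorem isBoundedUnder_sub_mul_comp_of_eventually_div_le {l : Filter ι} {L : ι → ℕ} {s : ℕ → 𝕜}
    {a : 𝕜} (h : ¬ IsBoundedUnder (· ≤ ·) l L → ∀ᶠ n : ℕ in atTop, s n / n ≤ a) :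
    IsBoundedUnder (· ≤ ·) l fun u ↦ s (L u) - a * L u := by
  by_cases hL : IsBoundedUnder (· ≤ ·) l L
  · exact isBoundedUnder_le_comp_of_locallyFiniteOrderBot hL fun n ↦ s n - a * n
  · have hbdd : BddAbove (Set.range fun n : ℕ ↦ s n - a * n) :=
      (isBoundedUnder_sub_mul_of_eventually_div_le tendsto_natCast_atTop_atTop
        (h hL)).bddAbove_range
    exact (hbdd.mono (Set.range_comp_subset_range L _)).isBoundedUnder_of_range

theorem mixture_of_sample_means_bound_general [Fintype I] {l : Filter ι} {C : 𝕜}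
    (G : I → ℕ → 𝕜) (L : I → ι → ℕ) (htot : Tendsto (fun u ↦ ∑ i, L i u) l atTop)
    (hmean : ∀ i, ¬ IsBoundedUnder (· ≤ ·) l (L i) →
      ∀ a > C, ∀ᶠ n : ℕ in atTop, (∑ k ∈ Finset.range n, G i k) / n ≤ a) :
    ∀ b > C, ∀ᶠ u in l,
      (∑ i, ∑ k ∈ Finset.range (L i u), G i k) / ((∑ i, L i u : ℕ) : 𝕜) ≤ b := by
  intro b hb
  obtain ⟨a, hCa, hab⟩ := exists_between hb
  have hsum : IsBoundedUnder (· ≤ ·) l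
      (∑ i, fun u ↦ ∑ k ∈ Finset.range (L i u), G i k - a * L i u) :=
    isBoundedUnder_le_sum Finset.univ fun i _ ↦
      isBoundedUnder_sub_mul_comp_of_eventually_div_le
        (s := fun n ↦ ∑ k ∈ Finset.range n, G i k) fun hi ↦ hmean i hi a hCa
  refine eventually_div_le_of_isBoundedUnder_sub_mul (tendsto_natCast_atTop_iff.mpr htot) ?_ hab
  simpa [Finset.sum_fn, Finset.sum_sub_distrib, Finset.mul_sum] using hsum

end SampleMeans

/-- Mixture-of-sample-means bound: if bounded sequences `G i` have
sample means converging to limits `≤ C` whenever their counts `L i u` tend to infinity,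
the counts are nondecreasing, and the total count `L u = Σ_i L i u` tends to infinity,
then the overall running average is eventually `≤ C + ε` for every `ε > 0`. -/
theorem mixture_of_sample_means_bound
    {I : Type} [Fintype I] [Nonempty I]
    (B : ℝ) (hB : 0 ≤ B) (C : ℝ)
    (G : I → ℕ → ℝ) (hbdd : ∀ (i : I) (l : ℕ), |G i l| ≤ B)
    (L : I → ℕ → ℕ) (hmono : ∀ i : I, Monotone (L i))
    (htot : Tendsto (fun u : ℕ => ∑ i : I, L i u) atTop atTop)
    (hconv : ∀ i : I, Tendsto (L i) atTop atTop →
      ∃ c : ℝ, c ≤ C ∧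
        Tendsto (fun n : ℕ => (∑ l ∈ Finset.range n, G i l) / (n : ℝ))
          atTop (nhds c)) :
    ∀ ε > (0 : ℝ), ∃ U : ℕ, ∀ u ≥ U,
      (∑ i : I, ∑ l ∈ Finset.range (L i u), G i l) / ((∑ i : I, L i u : ℕ) : ℝ)
        ≤ C + ε := by
  intro ε hε
  refine eventually_atTop.mp (mixture_of_sample_means_bound_general G L htot
    (fun i hi a ha ↦ ?_) (C + ε) (lt_add_of_pos_right C hε))
  have hLi : Tendsto (L i) atTop atTop :=
    tendsto_atTop_atTop_of_monotone' (hmono i) fun h ↦ hi h.isBoundedUnder_of_range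
  obtain ⟨c, hc, hlim⟩ := hconv i hLi
  exact hlim.eventually_le_const (hc.trans_lt ha)
end
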